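/- For all positive integers d and k with d ≤ √n/10, and every multilinear polynomial P of degree at most d over ℤ/2^kℤ, the fraction of points x ∈ {0,1}^n at which P(x) = Maj_{n,k}(x) is at most 1/2 + 10d/√n, where Maj_{n,k} is the k-lift of the majority function (Maj_{n,k}(x) = 2^{k−1} if |x| > n/2 and 0 otherwise). -/

import Mathlib

/-- Hamming weight of a Boolean vector. -/
def wt {n : ℕ} (x : Fin n → Bool) : ℕ :=
  (Finset.univ.filter (fun i => x i = true)).card

/-- Evaluation of the multilinear polynomial with coefficients `c` at the Boolean point `x`. -/
def evalML {n k : ℕ} (c : Finset (Fin n) → ZMod (2 ^ k)) (x : Fin n → Bool) : ZMod (2 ^ k) :=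
  ∑ S : Finset (Fin n), c S * ∏ i ∈ S, (if x i then 1 else 0)

/-- Zeta transform: evaluation at the indicator of `T`. -/
def zet {n : ℕ} {R : Type*} [CommRing R] (c : Finset (Fin n) → R) (T : Finset (Fin n)) : R :=
  ∑ S ∈ T.powerset, c S

lemma zet_eq {n : ℕ} {R : Type*} [CommRing R] (c : Finset (Fin n) → R) (T : Finset (Fin n)) :
    zet c T = ∑ S : Finset (Fin n), if S ⊆ T then c S else 0 := by
  unfold zet
  rw [← Finset.sum_filter]
  congr 1
  ext S
  simp

lemma evalML_eq {n k : ℕ} (c : Finset (Fin n) → ZMod (2 ^ k)) (x : Fin n → Bool) :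
    evalML c x = zet c (Finset.univ.filter (fun i => x i = true)) := by
  rw [zet_eq]
  unfold evalML
  refine Finset.sum_congr rfl fun S _ => ?_
  rw [Finset.prod_ite_zero]
  simp [Finset.subset_iff]

/-- low-degree polynomials vanishing on low-weight points vanish -/
lemma zet_low {n : ℕ} {R : Type*} [CommRing R] (e : Finset (Fin n) → R) (m : ℕ)
    (h : ∀ S : Finset (Fin n), m < S.card → e S = 0)
    (h0 : ∀ T : Finset (Fin n), T.card ≤ m → zet e T = 0) : ∀ S, e S = 0 := by
  intro S
  induction S using Finset.strongInduction with
  | H S ih =>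
    by_cases hS : m < S.card
    · exact h S hS
    · have := h0 S (by omega)
      unfold zet at this
      rw [Finset.sum_eq_single S] at this
      · exact this
      · intro b hb hne
        exact ih b (lt_of_le_of_ne (Finset.mem_powerset.1 hb) hne)
      · simp

lemma zet_mul {n : ℕ} {R : Type*} [CommRing R] (a b : Finset (Fin n) → R) (p q : ℕ)
    (ha : ∀ S : Finset (Fin n), p < S.card → a S = 0)
    (hb : ∀ S : Finset (Fin n), q < S.card → b S = 0) :
    ∃ e : Finset (Fin n) → R, (∀ S : Finset (Fin n), p + q < S.card → e S = 0) ∧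
      ∀ T, zet e T = zet a T * zet b T := by
  refine ⟨fun U => ∑ z : Finset (Fin n) × Finset (Fin n),
    if z.1 ∪ z.2 = U then a z.1 * b z.2 else 0, ?_, ?_⟩
  · intro S hS
    refine Finset.sum_eq_zero fun z _ => ?_
    split_ifs with hz
    · have := Finset.card_union_le z.1 z.2
      rw [hz] at this
      by_cases h1 : p < z.1.card
      · rw [ha _ h1, zero_mul]
      · rw [hb _ (by omega), mul_zero]
    · rfl
  · intro T
    rw [zet, Finset.sum_comm, zet_eq, zet_eq, Finset.sum_mul_sum, Fintype.sum_prod_type]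
    refine Finset.sum_congr rfl fun y _ => ?_
    refine Finset.sum_congr rfl fun z _ => ?_
    rw [Finset.sum_ite_eq]
    simp only [Finset.mem_powerset, Finset.union_subset_iff]
    by_cases h1 : y ⊆ T <;> by_cases h2 : z ⊆ T <;> simp [h1, h2]

/-- over `F_2`, a polynomial of degree at most `D` vanishing near the top is zero -/
lemma zet_high {n : ℕ} (q : Finset (Fin n) → ZMod 2) (D : ℕ)
    (h : ∀ S : Finset (Fin n), D < S.card → q S = 0)
    (h0 : ∀ T : Finset (Fin n), n ≤ T.card + D → zet q T = 0) : ∀ S, q S = 0 := by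
  by_contra! hne
  obtain ⟨S0, hS0⟩ := hne
  obtain ⟨S, hS, hmax⟩ := Finset.exists_max_image
    (Finset.univ.filter fun S : Finset (Fin n) => q S ≠ 0) Finset.card ⟨S0, by simpa using hS0⟩
  simp only [Finset.mem_filter, Finset.mem_univ, true_and] at hS hmax
  have hSD : S.card ≤ D := by
    by_contra hc
    exact hS (h S (by omega))
  have key : ∑ T ∈ S.powerset, zet q (Sᶜ ∪ T) = 0 := by
    refine Finset.sum_eq_zero fun T _ => h0 _ ?_
    have h1 := Finset.card_le_card (Finset.subset_union_left (s₁ := Sᶜ) (s₂ := T))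
    have h2 := Finset.card_add_card_compl S
    simp only [Fintype.card_fin] at h2
    omega
  simp_rw [zet_eq] at key
  rw [Finset.sum_comm, Finset.sum_eq_single S] at key
  · apply hS
    rw [Finset.sum_eq_single S] at key
    · simpa using key
    · intro T hT hTS
      rw [if_neg]
      intro hc
      apply hTS
      refine Finset.Subset.antisymm (Finset.mem_powerset.1 hT) fun i hi => ?_
      have := hc hi
      simpa [hi] using this
    · simp
  · intro U _ hU
    by_cases hqU : q U = 0
    · simp [hqU]
    have hnot : ¬ S ⊆ U := fun hc => hU (Finset.eq_of_subset_of_card_le hc (hmax U hqU)).symm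
    obtain ⟨i, hiS, hiU⟩ := Finset.not_subset.1 hnot
    rw [← Finset.insert_erase hiS, Finset.sum_powerset_insert (Finset.notMem_erase i S),
      Finset.insert_erase hiS, ← Finset.sum_add_distrib]
    refine Finset.sum_eq_zero fun T _ => ?_
    have : (U ⊆ Sᶜ ∪ insert i T) ↔ U ⊆ Sᶜ ∪ T := by
      rw [Finset.union_insert, Finset.subset_insert_iff_of_notMem hiU]
    simp only [this]
    exact CharTwo.add_self_eq_zero _
  · simp

/-- primitive integer polynomial vanishing on a small set -/
lemma exists_prim {n : ℕ} (D : ℕ) (F : Finset (Finset (Fin n)))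
    (hF : F.card < (Finset.univ.filter fun S : Finset (Fin n) => S.card ≤ D).card) :
    ∃ q : Finset (Fin n) → ℤ, (∀ S : Finset (Fin n), D < S.card → q S = 0) ∧
      (∀ T ∈ F, zet q T = 0) ∧ ∃ S, ¬ (2 ∣ q S) := by
  classical
  set I := Finset.univ.filter fun S : Finset (Fin n) => S.card ≤ D with hI
  let M : Matrix F I ℤ := fun T S => if S.1 ⊆ T.1 then 1 else 0
  have hker : LinearMap.ker M.mulVecLin ≠ ⊥ := by
    intro hbot
    have := LinearMap.finrank_le_finrank_of_injective (LinearMap.ker_eq_bot.1 hbot)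
    simp at this
    omega
  obtain ⟨v, hv, hv0⟩ := (Submodule.ne_bot_iff _).1 hker
  obtain ⟨i0, hi0⟩ := Function.ne_iff.1 hv0
  obtain ⟨g, hg, hg1⟩ := Finset.extract_gcd v (s := Finset.univ) ⟨i0, Finset.mem_univ _⟩
  set G := Finset.univ.gcd v with hG
  have hG0 : G ≠ 0 := by
    intro h
    apply hi0
    rw [hg i0 (Finset.mem_univ _), h]; simp
  refine ⟨fun S => if h : S ∈ I then g ⟨S, h⟩ else 0, ?_, ?_, ?_⟩
  · intro S hS
    simp [hI, hS]
  · intro T hT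
    have h1 := congrFun (LinearMap.mem_ker.1 hv) ⟨T, hT⟩
    have h1 : ∑ S : I, (if S.1 ⊆ T then (1 : ℤ) else 0) * v S = 0 := h1
    have h2 : G * ∑ S : I, (if S.1 ⊆ T then g S else 0) = 0 := by
      refine Eq.trans ?_ h1
      rw [Finset.mul_sum]
      refine Finset.sum_congr rfl fun S _ => ?_
      rw [hg S (Finset.mem_univ _)]
      split_ifs <;> simp
    have h3 := (mul_eq_zero.1 h2).resolve_left hG0
    rw [zet_eq]
    refine Eq.trans ?_ h3
    rw [← Finset.sum_subset (Finset.subset_univ I), ← Finset.sum_coe_sort I]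
    · refine Finset.sum_congr rfl fun S _ => ?_
      simp
    · intro S _ hS
      simp [hS]
  · by_contra! hall
    have : (2 : ℤ) ∣ Finset.univ.gcd g := by
      refine Finset.dvd_gcd fun b _ => ?_
      simpa using hall b.1
    rw [hg1] at this
    norm_num at this

lemma key_card {n d k D : ℕ} (hd : 1 ≤ d) (hk : 1 ≤ k) (hD : D + d ≤ n / 2)
    (c : Finset (Fin n) → ZMod (2 ^ k)) (hdeg : ∀ S, c S ≠ 0 → S.card ≤ d)
    (F : Finset (Finset (Fin n)))
    (hF : ∀ T, T ∉ F → zet c T = if n < 2 * T.card then (2 ^ (k - 1) : ZMod (2 ^ k)) else 0) :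
    (Finset.univ.filter fun S : Finset (Fin n) => S.card ≤ D).card ≤ F.card := by
  by_contra! hlt
  obtain ⟨q, hq1, hq2, S0, hS0⟩ := exists_prim D F hlt
  have hcast : ∀ (R : Type) [CommRing R] (T : Finset (Fin n)),
      zet (fun S => (q S : R)) T = ((zet q T : ℤ) : R) := by
    intro R _ T
    simp [zet]
  obtain ⟨e, he, hmul⟩ := zet_mul (fun S => (q S : ZMod (2 ^ k))) c D d
    (fun S hS => by simp [hq1 S hS])
    (fun S hS => by
      by_contra h
      have := hdeg S h
      omega)
  have hval : ∀ T, zet e T =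
      ((zet q T : ℤ) : ZMod (2 ^ k)) * if n < 2 * T.card then (2 ^ (k - 1) : ZMod (2 ^ k)) else 0 := by
    intro T
    rw [hmul, hcast]
    by_cases hT : T ∈ F
    · simp [hq2 T hT]
    · rw [hF T hT]
  have he0 := zet_low e (n / 2) (fun S hS => he S (by omega)) (fun T hT => by
    rw [hval, if_neg (by omega), mul_zero])
  have heven : ∀ T : Finset (Fin n), n < 2 * T.card → (2 : ℤ) ∣ zet q T := by
    intro T hT
    have h1 := hval T
    rw [if_pos hT] at h1
    have h2 : zet e T = 0 := by simp [zet, he0]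
    rw [h2] at h1
    have h3 : ((zet q T * 2 ^ (k - 1) : ℤ) : ZMod (2 ^ k)) = 0 := by
      push_cast; exact h1.symm
    rw [ZMod.intCast_zmod_eq_zero_iff_dvd] at h3
    obtain ⟨k', rfl⟩ : ∃ k', k = k' + 1 := ⟨k - 1, by omega⟩
    simp only [Nat.add_sub_cancel] at h3
    push_cast at h3
    rw [pow_succ, mul_comm (zet q T)] at h3
    exact Int.dvd_of_mul_dvd_mul_left (by positivity) h3
  have := zet_high (fun S => (q S : ZMod 2)) D (fun S hS => by simp [hq1 S hS]) (fun T hT => by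
    rw [hcast, ZMod.intCast_zmod_eq_zero_iff_dvd]
    exact heven T (by omega)) S0
  rw [ZMod.intCast_zmod_eq_zero_iff_dvd] at this
  exact hS0 this

lemma cb_bound (m : ℕ) : (m.centralBinom) ^ 2 * (2 * m + 1) ≤ 16 ^ m := by
  induction m with
  | zero => simp
  | succ m ih =>
    have h := Nat.succ_mul_centralBinom_succ m
    have h2 : (m + 1) ^ 2 * ((m + 1).centralBinom ^ 2 * (2 * (m + 1) + 1))
        ≤ (m + 1) ^ 2 * 16 ^ (m + 1) := by
      calc (m + 1) ^ 2 * ((m + 1).centralBinom ^ 2 * (2 * (m + 1) + 1))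
          = ((m + 1) * (m + 1).centralBinom) ^ 2 * (2 * (m + 1) + 1) := by ring
        _ = (m.centralBinom ^ 2 * (2 * m + 1)) * (4 * (2 * m + 1) * (2 * m + 3)) := by
            rw [h]; ring
        _ ≤ 16 ^ m * ((m + 1) ^ 2 * 16) := Nat.mul_le_mul ih (by nlinarith)
        _ = _ := by ring
    exact Nat.le_of_mul_le_mul_left h2 (by positivity)

lemma choose_bound (n : ℕ) : (n.choose (n / 2)) ^ 2 * n ≤ (2 ^ n) ^ 2 := by
  obtain ⟨m, rfl | rfl⟩ := Nat.even_or_odd' n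
  · have h := cb_bound m
    rw [Nat.centralBinom] at h
    have h2 : (2 ^ (2 * m)) ^ 2 = 16 ^ m := by
      rw [← pow_mul, show (16 : ℕ) = 2 ^ 4 by norm_num, ← pow_mul]; congr 1; ring
    rw [h2, Nat.mul_div_cancel_left m (by norm_num)]
    nlinarith
  · have h := cb_bound m
    have h2 : (2 ^ (2 * m + 1)) ^ 2 = 4 * 16 ^ m := by
      rw [show (16 : ℕ) = 2 ^ 4 by norm_num, ← pow_mul, ← pow_mul, show (4 : ℕ) = 2 ^ 2 by norm_num,
        ← pow_add]
      congr 1; ring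
    have h3 : (2 * m + 1).choose m ≤ 2 * m.centralBinom := by
      rcases m with _ | m
      · simp
      · rw [Nat.choose_succ_succ]
        have a1 := Nat.choose_le_centralBinom m (m + 1)
        have a2 := Nat.choose_le_centralBinom (m + 1) (m + 1)
        simp only [Nat.succ_eq_add_one] at *
        omega
    rw [h2, show (2 * m + 1) / 2 = m by omega]
    calc _ ≤ (2 * m.centralBinom) ^ 2 * (2 * m + 1) := by gcongr
      _ = 4 * (m.centralBinom ^ 2 * (2 * m + 1)) := by ring
      _ ≤ _ := by omega

lemma count {n d : ℕ} (hdn : d ≤ n / 2) :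
    2 ^ n ≤ 2 * (Finset.univ.filter fun S : Finset (Fin n) => S.card ≤ n / 2 - d).card
      + 2 * (d * n.choose (n / 2)) := by
  have hhalf : 2 ^ n ≤ 2 * (Finset.univ.filter fun S : Finset (Fin n) => S.card ≤ n / 2).card := by
    have h1 := Finset.card_filter_add_card_filter_not (s := (Finset.univ : Finset (Finset (Fin n))))
      (fun S => S.card ≤ n / 2)
    simp only [Finset.card_univ, Fintype.card_finset, Fintype.card_fin] at h1
    have h2 : (Finset.univ.filter fun S : Finset (Fin n) => ¬ S.card ≤ n / 2).card ≤
        (Finset.univ.filter fun S : Finset (Fin n) => S.card ≤ n / 2).card := by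
      refine Finset.card_le_card_of_injOn (fun S => Sᶜ) ?_ (compl_injective.injOn)
      intro S hS
      simp only [Finset.coe_filter, Finset.mem_univ, true_and, Set.mem_ofPred_eq] at hS ⊢
      have := Finset.card_add_card_compl S
      simp only [Fintype.card_fin] at this
      omega
    omega
  have hsub : (Finset.univ.filter fun S : Finset (Fin n) => S.card ≤ n / 2) ⊆
      (Finset.univ.filter fun S : Finset (Fin n) => S.card ≤ n / 2 - d) ∪
      (Finset.Ioc (n / 2 - d) (n / 2)).biUnion fun i => Finset.powersetCard i Finset.univ := by
    intro S hS
    simp at hS ⊢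
    omega
  have h3 := (Finset.card_le_card hsub).trans (Finset.card_union_le _ _)
  have h4 : ((Finset.Ioc (n / 2 - d) (n / 2)).biUnion fun i =>
      Finset.powersetCard i (Finset.univ : Finset (Fin n))).card ≤ d * n.choose (n / 2) := by
    refine (Finset.card_biUnion_le_card_mul _ _ (n.choose (n / 2)) ?_).trans ?_
    · intro i _
      simpa using Nat.choose_le_middle i n
    · rw [Nat.card_Ioc]
      gcongr
      omega
  omega

theorem stmt17 (n d k : ℕ) (hn : 1 ≤ n) (hd : 1 ≤ d) (hk : 1 ≤ k)
    (c : Finset (Fin n) → ZMod (2 ^ k)) (hdeg : ∀ S, c S ≠ 0 → S.card ≤ d) :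
    ((Finset.univ.filter (fun x : Fin n → Bool =>
        evalML c x = (if n < 2 * wt x then (2 ^ (k - 1) : ZMod (2 ^ k)) else 0))).card : ℝ)
      ≤ (1 / 2 + 10 * d / Real.sqrt n) * 2 ^ n := by
  classical
  set A := Finset.univ.filter (fun x : Fin n → Bool =>
        evalML c x = (if n < 2 * wt x then (2 ^ (k - 1) : ZMod (2 ^ k)) else 0)) with hA
  have hnpos : (0 : ℝ) < n := by exact_mod_cast hn
  have hs : 0 < Real.sqrt n := Real.sqrt_pos.2 hnpos
  have hs2 : Real.sqrt n ^ 2 = n := Real.sq_sqrt hnpos.le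
  by_cases hbig : n / 2 < d
  · -- trivial range
    have h1 : (A.card : ℝ) ≤ 2 ^ n := by
      have := Finset.card_le_univ A
      simp at this
      exact_mod_cast this
    have h2 : (n : ℝ) ≤ 2 * d := by
      have : n ≤ 2 * d := by omega
      exact_mod_cast this
    have h3 : (1 : ℝ) / 2 ≤ 10 * d / Real.sqrt n := by
      rw [le_div_iff₀ hs]
      have : (1 : ℝ) ≤ d := by exact_mod_cast hd
      nlinarith [sq_nonneg (Real.sqrt n - 1)]
    have h4 : (0 : ℝ) < 2 ^ n := by positivity
    nlinarith
  · push Not at hbig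
    set E := Finset.univ.filter (fun T : Finset (Fin n) =>
      zet c T = if n < 2 * T.card then (2 ^ (k - 1) : ZMod (2 ^ k)) else 0) with hE
    have hAE : A.card ≤ E.card := by
      refine Finset.card_le_card_of_injOn
        (fun x => Finset.univ.filter (fun i => x i = true)) ?_ ?_
      · intro x hx
        simp only [hA, hE, Finset.coe_filter, Finset.mem_univ, true_and, Set.mem_ofPred_eq] at hx ⊢
        rw [← evalML_eq, hx]
        rfl
      · intro x _ y _ hxy
        funext i
        have := Finset.ext_iff.1 hxy i
        simp only [Finset.mem_filter, Finset.mem_univ, true_and] at this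
        exact Bool.eq_iff_iff.2 this
    have hkey := key_card (D := n / 2 - d) hd hk (by omega) c hdeg Eᶜ (by
      intro T hT
      simpa [hE] using hT)
    have hcompl := Finset.card_add_card_compl E
    simp only [Fintype.card_finset, Fintype.card_fin] at hcompl
    have hcount := count hbig
    have hmain : 2 * A.card ≤ 2 ^ n + 2 * (d * n.choose (n / 2)) := by omega
    have hmainR : 2 * (A.card : ℝ) ≤ 2 ^ n + 2 * (d * n.choose (n / 2)) := by exact_mod_cast hmain
    have hch : ((n.choose (n / 2) : ℝ)) * Real.sqrt n ≤ 2 ^ n := by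
      have h := choose_bound n
      have h' : ((n.choose (n / 2) : ℝ)) ^ 2 * n ≤ (2 ^ n) ^ 2 := by exact_mod_cast h
      refine le_of_sq_le_sq ?_ (by positivity)
      rw [mul_pow, hs2]
      exact h'
    have hch2 : (n.choose (n / 2) : ℝ) ≤ 2 ^ n / Real.sqrt n := by
      rwa [le_div_iff₀ hs]
    have hX : (0 : ℝ) ≤ 2 ^ n / Real.sqrt n := by positivity
    have hd0 : (0 : ℝ) ≤ d := by positivity
    have e1 : (1 / 2 + 10 * d / Real.sqrt n) * 2 ^ n
        = (1 / 2) * 2 ^ n + 10 * (d * (2 ^ n / Real.sqrt n)) := by ring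
    rw [e1]
    have e2 := mul_le_mul_of_nonneg_left hch2 hd0
    have e3 := mul_nonneg hd0 hX
    linarith
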